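/- For every real ε with 0 < ε < 1, every d ≥ 1, and every F ∈ ℕ^d, N(F) ≤ (√3)^{(1 − 2ε^d)·‖F‖} + ε^d·‖F‖·φ^{‖F‖}·(φ/5^{1/4})^{(1 − (1−ε)^d)·‖F‖}, where φ = (1+√5)/2 is the golden ratio. -/

import Mathlib

open Finset

/-- A generalized numerical semigroup (GNS) in `ℕ^d`: contains `0`, is closed under
componentwise addition, and has finite complement. -/
def IsGNS {d : ℕ} (S : Set (Fin d → ℕ)) : Prop :=
  (0 : Fin d → ℕ) ∈ S ∧ (∀ a ∈ S, ∀ b ∈ S, a + b ∈ S) ∧ Sᶜ.Finite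

/-- A relaxed monomial order on `ℕ^d`: a (strict) total order `r` such that
`r v w → r v (w + u)` and `0` is below every nonzero element. -/
def IsRMO {d : ℕ} (r : (Fin d → ℕ) → (Fin d → ℕ) → Prop) : Prop :=
  IsStrictTotalOrder (Fin d → ℕ) r ∧
  (∀ v w u : Fin d → ℕ, r v w → r v (w + u)) ∧
  (∀ v : Fin d → ℕ, v ≠ 0 → r 0 v)

/-- `F` is the Frobenius gap of `S` with respect to the order `r`, i.e. the
`r`-maximum of the gap set `ℕ^d \ S`. -/
def IsFrobGapWrt {d : ℕ} (S : Set (Fin d → ℕ))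
    (r : (Fin d → ℕ) → (Fin d → ℕ) → Prop) (F : Fin d → ℕ) : Prop :=
  F ∉ S ∧ ∀ x, x ∉ S → x ≠ F → r x F

/-- `F` is a Frobenius allowable gap of `S`: it is the Frobenius gap with respect to
some relaxed monomial order. -/
def FrobAllowable {d : ℕ} (S : Set (Fin d → ℕ)) (F : Fin d → ℕ) : Prop :=
  ∃ r, IsRMO r ∧ IsFrobGapWrt S r F

/-- `F` is a maximal gap of `S` with respect to the natural (componentwise)
partial order on `ℕ^d`. -/
def MaxGap {d : ℕ} (S : Set (Fin d → ℕ)) (F : Fin d → ℕ) : Prop :=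
  F ∉ S ∧ ∀ x, x ∉ S → F ≤ x → x = F

/-- The set of Frobenius allowable gaps of `S`, i.e. the maximal elements of the gap
set under the natural partial order. -/
def FA {d : ℕ} (S : Set (Fin d → ℕ)) : Set (Fin d → ℕ) := {F | MaxGap S F}

/-- The set of pseudo-Frobenius gaps of `S`. -/
def PF {d : ℕ} (S : Set (Fin d → ℕ)) : Set (Fin d → ℕ) :=
  {P | P ∉ S ∧ ∀ s ∈ S, s ≠ 0 → P + s ∈ S}

/-- `S` is quasi-irreducible: for every gap `x`, either `2x` is Frobenius allowable or
`F - x ∈ S` for some Frobenius allowable gap `F`. -/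
def QuasiIrreducible {d : ℕ} (S : Set (Fin d → ℕ)) : Prop :=
  ∀ x, x ∉ S → (x + x ∈ FA S ∨ ∃ F ∈ FA S, ∃ s ∈ S, x + s = F)

/-- `S` is a Frobenius GNS with Frobenius gap `F`: the gap set has `F` as its unique
maximal element under the natural partial order. -/
def IsFrobeniusGNS {d : ℕ} (S : Set (Fin d → ℕ)) (F : Fin d → ℕ) : Prop :=
  IsGNS S ∧ MaxGap S F ∧ ∀ x, MaxGap S x → x = F

/-- `‖F‖ = ∏ i (F^(i) + 1)`, the number of lattice points in the box `[0, F]`. -/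
def normF {d : ℕ} (F : Fin d → ℕ) : ℕ := ∏ i, (F i + 1)

/-- `N(F)`: the number of Frobenius GNS in `ℕ^d` with Frobenius gap `F`. -/
noncomputable def NF {d : ℕ} (F : Fin d → ℕ) : ℕ :=
  {S : Set (Fin d → ℕ) | IsFrobeniusGNS S F}.ncard

/-!
A Frobenius GNS `S` with Frobenius gap `F` contains every point outside the box `[0, F]`, so it is
determined by its trace `A = S ∩ [0, F]`, and `A` never contains both `x` and `F - x`. Three choices
for each pair `{x, F - x}` give about `√3 ^ ‖F‖` traces. Two kinds of traces are rarer: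

* those disjoint from a given set `D`, since every `x ∈ D` leaves at most two thirds of the choices
  for its pair;
* those containing a given `s ≠ 0`, since such a trace is closed upwards on each chain
  `x, x + s, x + 2s, …` and hence determined by its number of points on each chain. Only `3 / 2`
  times `2 ^ L` pairs of such numbers are possible on a chain of length `L` and its reflection, and
  there are at most `‖F‖ - |[s, F]|` chains, which saves a factor `(2 / 3) ^ (|[s, F]| / 2)`.

Every trace is disjoint from `D` or contains some `s ∈ D`. Taking `D` inside the corner of `[0, F]`
scaled by some `β` makes `|[s, F]| ≥ (1 - β) ^ d * ‖F‖` for all `s ∈ D`, and it remains to balance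
`β` and the size of `D`. The obvious choice `β = ε` works when `ε ^ d` is large compared with the
required saving; otherwise `β` close to `2ε` or `3ε` makes room for a `D` large enough to
yield the factor `3 ^ (-ε ^ d * ‖F‖)`.
-/

section Involution

variable {α ι κ : Type*}

/- Squaring the count lets a pair `(A, B)` store `A` on one member of each orbit `{z, σ z}` and `B`
on the other, so that no choice of orbit representatives enters the product. -/
theorem card_sq_le_prod_card_of_involution {𝒢 : Finset α} {Z : Finset ι} {σ : ι → ι}
    (hσ : ∀ z ∈ Z, σ z ∈ Z) (hσσ : ∀ z ∈ Z, σ (σ z) = z) (a : α → ι → κ)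
    (hinj : ∀ A ∈ 𝒢, ∀ B ∈ 𝒢, (∀ z ∈ Z, a A z = a B z) → A = B)
    (R : ι → Finset (κ × κ)) (hR : ∀ A ∈ 𝒢, ∀ z ∈ Z, (a A z, a A (σ z)) ∈ R z)
    (hfix : ∀ A ∈ 𝒢, ∀ B ∈ 𝒢, ∀ z ∈ Z, σ z = z → (a A z, a B z) ∈ R z) :
    #𝒢 ^ 2 ≤ ∏ z ∈ Z, #(R z) := by
  classical
  let _ : LinearOrder ι := IsWellOrder.linearOrder WellOrderingRel
  let code (P : α × α) (z : ι) : κ × κ :=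
    (a (if z ≤ σ z then P.1 else P.2) z, a (if z < σ z then P.1 else P.2) (σ z))
  have code_mem : ∀ P ∈ 𝒢 ×ˢ 𝒢, ∀ z ∈ Z, code P z ∈ R z := by
    intro P hP z hz
    obtain ⟨hA, hB⟩ := mem_product.1 hP
    rcases lt_trichotomy z (σ z) with h | h | h
    · simpa only [code, if_pos h, if_pos h.le] using hR _ hA z hz
    · simpa only [code, ← h, le_refl, lt_irrefl, if_true, if_false] using hfix _ hA _ hB z hz h.symm
    · simpa only [code, if_neg h.not_ge, if_neg h.not_gt] using hR _ hB z hz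
  have code_determines : ∀ P Q : α × α, (∀ z ∈ Z, code P z = code Q z) →
      ∀ z ∈ Z, a P.1 z = a Q.1 z ∧ a P.2 z = a Q.2 z := by
    intro P Q h z hz
    have at_z := congrArg Prod.fst (h z hz)
    have at_σz := congrArg Prod.snd (h _ (hσ z hz))
    simp only [code, hσσ z hz] at at_z at_σz
    rcases le_or_gt z (σ z) with hle | hlt
    · rw [if_pos hle, if_pos hle] at at_z
      rw [if_neg hle.not_gt, if_neg hle.not_gt] at at_σz
      exact ⟨at_z, at_σz⟩
    · rw [if_neg hlt.not_ge, if_neg hlt.not_ge] at at_z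
      rw [if_pos hlt, if_pos hlt] at at_σz
      exact ⟨at_σz, at_z⟩
  calc #𝒢 ^ 2 = #(𝒢 ×ˢ 𝒢) := by rw [card_product, sq]
    _ ≤ #(Z.pi R) := by
      refine card_le_card_of_injOn (fun P z _ ↦ code P z)
        (fun P hP ↦ mem_pi.2 (code_mem P hP)) fun P hP Q hQ hPQ ↦ ?_
      have hdet := code_determines P Q fun z hz ↦ congrFun (congrFun hPQ z) hz
      obtain ⟨hP₁, hP₂⟩ := mem_product.1 hP
      obtain ⟨hQ₁, hQ₂⟩ := mem_product.1 hQ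
      exact Prod.ext (hinj _ hP₁ _ hQ₁ fun z hz ↦ (hdet z hz).1)
        (hinj _ hP₂ _ hQ₂ fun z hz ↦ (hdet z hz).2)
    _ = ∏ z ∈ Z, #(R z) := card_pi _ _

end Involution

section Traces

variable {d : ℕ} {F : Fin d → ℕ} {A B : Finset (Fin d → ℕ)}

/-- The conditions satisfied by `S ∩ [0, F]` when `S` is a Frobenius GNS with Frobenius gap `F`;
such an `S` contains everything outside `[0, F]`, so it is determined by this trace. -/
structure IsTrace (F : Fin d → ℕ) (A : Finset (Fin d → ℕ)) : Prop where
  subset : A ⊆ Iic F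
  zero_mem : 0 ∈ A
  notMem : F ∉ A
  add_mem : ∀ x ∈ A, ∀ y ∈ A, x + y ≤ F → x + y ∈ A

open Classical in
/-- The finite set of all traces on `[0, F]`; it stands in for the Frobenius GNS counted by
`NF F`. -/
noncomputable def traces (F : Fin d → ℕ) : Finset (Finset (Fin d → ℕ)) :=
  {A ∈ (Iic F).powerset | IsTrace F A}

theorem mem_traces : A ∈ traces F ↔ IsTrace F A := by
  simp only [traces, mem_filter, mem_powerset, and_iff_right_iff_imp]
  exact IsTrace.subset

theorem IsFrobeniusGNS.le_of_notMem {S : Set (Fin d → ℕ)} (hS : IsFrobeniusGNS S F)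
    {x : Fin d → ℕ} (hx : x ∉ S) : x ≤ F := by
  obtain ⟨⟨-, -, hfin⟩, -, huniq⟩ := hS
  obtain ⟨m, hxm, hm⟩ := hfin.exists_le_maximal (a := x) hx
  rwa [← huniq m ⟨hm.1, fun y hy hmy ↦ (hm.eq_of_le hy hmy).symm⟩]

open Classical in
theorem IsFrobeniusGNS.isTrace {S : Set (Fin d → ℕ)} (hS : IsFrobeniusGNS S F) :
    IsTrace F {x ∈ Iic F | x ∈ S} where
  subset := filter_subset _ _
  zero_mem := mem_filter.2 ⟨mem_Iic.2 zero_le, hS.1.1⟩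
  notMem h := hS.2.1.1 (mem_filter.1 h).2
  add_mem x hx y hy hxy :=
    mem_filter.2 ⟨mem_Iic.2 hxy, hS.1.2.1 x (mem_filter.1 hx).2 y (mem_filter.1 hy).2⟩

theorem NF_le_card_traces (F : Fin d → ℕ) : NF F ≤ #(traces F) := by
  classical
  rw [NF, ← Set.ncard_coe_finset]
  refine Set.ncard_le_ncard_of_injOn (fun S ↦ {x ∈ Iic F | x ∈ S})
    (fun S hS ↦ mem_traces.2 hS.isTrace) (fun S hS S' hS' hSS' ↦ ?_) (finite_toSet _)
  ext x
  by_cases hx : x ≤ F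
  · simpa [hx] using Finset.ext_iff.1 hSS' x
  · exact iff_of_true (by_contra fun h ↦ hx (hS.le_of_notMem h))
      (by_contra fun h ↦ hx (hS'.le_of_notMem h))

theorem normF_eq_card_Icc (F : Fin d → ℕ) : normF F = #(Icc 0 F) := by
  simp [normF, Pi.card_Icc]

theorem normF_eq_card_Iic (F : Fin d → ℕ) : normF F = #(Iic F) := by
  simp [normF, Pi.card_Iic]

theorem normF_eq_card_Ioo_add_two (hF : F ≠ 0) : normF F = #(Ioo 0 F) + 2 := by
  have hpair : #({0, F} : Finset (Fin d → ℕ)) ≤ #(Icc 0 F) :=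
    card_le_card (by simp [insert_subset_iff])
  rw [card_pair hF.symm] at hpair
  rw [normF_eq_card_Icc, card_Ioo_eq_card_Icc_sub_two]
  omega

namespace IsTrace

theorem sub_notMem (hA : IsTrace F A) {x : Fin d → ℕ} (hx : x ∈ A) : F - x ∉ A := by
  intro hx'
  have hsum : x + (F - x) = F := add_tsub_cancel_of_le (mem_Iic.1 (hA.subset hx))
  exact hA.notMem (hsum ▸ hA.add_mem x hx _ hx' hsum.le)

theorem add_nsmul_mem (hA : IsTrace F A) {s x : Fin d → ℕ} (hs : s ∈ A) (hx : x ∈ A) (k : ℕ)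
    (hk : x + k • s ≤ F) : x + k • s ∈ A := by
  induction k with
  | zero => simpa using hx
  | succ k ih =>
    rw [succ_nsmul, ← add_assoc] at hk ⊢
    exact hA.add_mem _ (ih (le_self_add.trans hk)) _ hs hk

theorem subset_of_forall_mem_Ioo (hA : IsTrace F A) (hB : IsTrace F B)
    (h : ∀ x ∈ Ioo 0 F, x ∈ A → x ∈ B) : A ⊆ B := by
  intro x hx
  rcases eq_or_ne x 0 with rfl | hx0
  · exact hB.zero_mem
  · have hxF : x ≠ F := fun h ↦ hA.notMem (h ▸ hx)
    exact h x (mem_Ioo.2 ⟨pos_iff_ne_zero.2 hx0, (mem_Iic.1 (hA.subset hx)).lt_of_ne hxF⟩) hx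

end IsTrace

end Traces

section Avoiding

variable {d : ℕ} {F x : Fin d → ℕ} {A D : Finset (Fin d → ℕ)}

theorem sub_mem_Ioo (hx : x ∈ Ioo 0 F) : F - x ∈ Ioo 0 F := by
  have hxF := (mem_Ioo.1 hx).2.le
  refine mem_Ioo.2 ⟨pos_iff_ne_zero.2 fun h ↦ ?_, tsub_le_self.lt_of_ne fun h ↦ ?_⟩
  · exact (mem_Ioo.1 hx).2.not_ge (tsub_eq_zero_iff_le.1 h)
  · have hsum := tsub_add_cancel_of_le hxF
    rw [h, add_eq_left] at hsum
    exact (mem_Ioo.1 hx).1.ne' hsum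

/-- The admissible truth values of `x ∈ A` and `F - x ∈ A` for a trace `A` avoiding a set `D`, where
`p` and `q` record whether `x ∈ D` and `F - x ∈ D`. -/
def avoidingPairs (p q : Bool) : Finset (Bool × Bool) :=
  {c | (c.1 = true → c.2 = false) ∧ (p = true → c.1 = false) ∧ (q = true → c.2 = false)}

theorem card_avoidingPairs_le (p q : Bool) :
    (#(avoidingPairs p q) : ℝ) ≤ 3 * (if p then 2 / 3 else 1) * (if q then 2 / 3 else 1) := by
  have h00 : #(avoidingPairs false false) = 3 := rfl
  have h01 : #(avoidingPairs false true) = 2 := rfl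
  have h10 : #(avoidingPairs true false) = 2 := rfl
  have h11 : #(avoidingPairs true true) = 1 := rfl
  cases p <;> cases q <;> norm_num [h00, h01, h10, h11]

theorem IsTrace.mem_avoidingPairs (hA : IsTrace F A) (hAD : Disjoint A D) (x : Fin d → ℕ) :
    (decide (x ∈ A), decide (F - x ∈ A)) ∈ avoidingPairs (x ∈ D) (F - x ∈ D) := by
  simp only [avoidingPairs, mem_filter_univ, decide_eq_true_eq, decide_eq_false_iff_not]
  exact ⟨hA.sub_notMem, fun h ↦ disjoint_right.1 hAD h, fun h ↦ disjoint_right.1 hAD h⟩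

theorem card_traces_disjoint_sq_le_prod (F : Fin d → ℕ) (D : Finset (Fin d → ℕ)) :
    #{A ∈ traces F | Disjoint A D} ^ 2 ≤
      ∏ x ∈ Ioo 0 F, #(avoidingPairs (x ∈ D) (F - x ∈ D)) := by
  have htrace : ∀ A ∈ {A ∈ traces F | Disjoint A D}, IsTrace F A ∧ Disjoint A D :=
    fun A hA ↦ (mem_filter.1 hA).imp_left mem_traces.1
  refine card_sq_le_prod_card_of_involution (σ := (F - ·)) (fun x ↦ sub_mem_Ioo)
    (fun x hx ↦ tsub_tsub_cancel_of_le (mem_Ioo.1 hx).2.le) (fun A x ↦ decide (x ∈ A))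
    (fun A hA B hB hAB ↦ ?_) _ (fun A hA x _ ↦ ?_) (fun A hA B hB x _ hfix ↦ ?_)
  · obtain ⟨hA, -⟩ := htrace A hA
    obtain ⟨hB, -⟩ := htrace B hB
    exact (hA.subset_of_forall_mem_Ioo hB fun x hx ↦ (decide_eq_decide.1 (hAB x hx)).1).antisymm
      (hB.subset_of_forall_mem_Ioo hA fun x hx ↦ (decide_eq_decide.1 (hAB x hx)).2)
  · exact (htrace A hA).1.mem_avoidingPairs (htrace A hA).2 x
  · have hxA : x ∉ A := fun h ↦ (htrace A hA).1.sub_notMem h (by rwa [hfix])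
    have hxB : x ∉ B := fun h ↦ (htrace B hB).1.sub_notMem h (by rwa [hfix])
    simp [avoidingPairs, hxA, hxB]

theorem card_traces_disjoint_sq_le (hD : D ⊆ Ioo 0 F) :
    (#{A ∈ traces F | Disjoint A D} : ℝ) ^ 2 ≤ 3 ^ #(Ioo 0 F) * ((2 / 3) ^ #D) ^ 2 := by
  have hweight : ∏ x ∈ Ioo 0 F, (if x ∈ D then (2 / 3 : ℝ) else 1) = (2 / 3) ^ #D := by
    rw [prod_ite_mem, inter_eq_right.2 hD, prod_const]
  have hweight' : ∏ x ∈ Ioo 0 F, (if F - x ∈ D then (2 / 3 : ℝ) else 1) = (2 / 3) ^ #D := by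
    rw [← hweight]
    exact prod_nbij' (F - ·) (F - ·) (fun x ↦ sub_mem_Ioo) (fun x ↦ sub_mem_Ioo)
      (fun x hx ↦ tsub_tsub_cancel_of_le (mem_Ioo.1 hx).2.le)
      (fun x hx ↦ tsub_tsub_cancel_of_le (mem_Ioo.1 hx).2.le) fun _ _ ↦ rfl
  calc (#{A ∈ traces F | Disjoint A D} : ℝ) ^ 2
      ≤ ∏ x ∈ Ioo 0 F, (#(avoidingPairs (x ∈ D) (F - x ∈ D)) : ℝ) := by
        exact_mod_cast card_traces_disjoint_sq_le_prod F D
    _ ≤ ∏ x ∈ Ioo 0 F, (3 * (if x ∈ D then 2 / 3 else 1) * (if F - x ∈ D then 2 / 3 else 1)) :=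
      prod_le_prod (fun _ _ ↦ Nat.cast_nonneg _) fun x _ ↦ by
        simpa only [decide_eq_true_eq] using card_avoidingPairs_le (x ∈ D) (F - x ∈ D)
    _ = 3 ^ #(Ioo 0 F) * ((2 / 3) ^ #D) ^ 2 := by
      rw [prod_mul_distrib, prod_mul_distrib, prod_const, hweight, hweight']
      ring

theorem card_traces_disjoint_le (hF : F ≠ 0) (hD : D ⊆ Ioo 0 F) :
    (#{A ∈ traces F | Disjoint A D} : ℝ) ≤ √3 ^ normF F / 3 * (2 / 3) ^ #D := by
  refine le_of_sq_le_sq ?_ (by positivity)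
  have hsqrt : (√3 ^ normF F) ^ 2 = 3 ^ normF F := by rw [pow_right_comm, Real.sq_sqrt (by simp)]
  calc _ ≤ (3 : ℝ) ^ #(Ioo 0 F) * ((2 / 3) ^ #D) ^ 2 := card_traces_disjoint_sq_le hD
    _ = (√3 ^ normF F / 3 * (2 / 3) ^ #D) ^ 2 := by
      rw [mul_pow, div_pow (√3 ^ normF F), hsqrt, normF_eq_card_Ioo_add_two hF, pow_add]
      ring

end Avoiding

section Containing

variable {d : ℕ} {F s x y : Fin d → ℕ} {A B : Finset (Fin d → ℕ)}

/-- The group of integer vectors modulo the multiples of `s`. Its elements that come from `ℕ^d`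
index the chains `x, x + s, x + 2s, …`. -/
abbrev ChainGroup (s : Fin d → ℕ) : Type :=
  (Fin d → ℤ) ⧸ AddSubgroup.zmultiples (fun i ↦ (s i : ℤ))

/-- The chain in direction `s` through a point of `ℕ^d`. -/
def chainClass (s : Fin d → ℕ) : (Fin d → ℕ) →+ ChainGroup s :=
  (QuotientAddGroup.mk' _).comp ((Nat.castAddMonoidHom ℤ).compLeft (Fin d))

theorem chainClass_self (s : Fin d → ℕ) : chainClass s s = 0 :=
  (QuotientAddGroup.eq_zero_iff _).2 (AddSubgroup.mem_zmultiples _)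

theorem exists_eq_add_nsmul_of_chainClass_eq (h : chainClass s x = chainClass s y) :
    ∃ k : ℕ, y = x + k • s ∨ x = y + k • s := by
  obtain ⟨k, hk⟩ := AddSubgroup.mem_zmultiples_iff.1 (QuotientAddGroup.eq.1 h)
  have hcoord : ∀ i, k * (s i : ℤ) = -(x i : ℤ) + y i := fun i ↦ by simpa using congrFun hk i
  obtain ⟨m, rfl | rfl⟩ := k.eq_nat_or_neg <;> refine ⟨m, ?_⟩
  · refine .inl (funext fun i ↦ ?_)
    zify
    simpa using by linarith [hcoord i]
  · refine .inr (funext fun i ↦ ?_)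
    zify
    simpa using by linarith [hcoord i]

theorem chainClass_sub (h : x ≤ y) : chainClass s (y - x) = chainClass s y - chainClass s x :=
  eq_sub_of_add_eq (by rw [← map_add, tsub_add_cancel_of_le h])

open Classical in
/-- The part of a finite set of points lying on the chain `q`. -/
noncomputable def chainPart (A : Finset (Fin d → ℕ)) (q : ChainGroup s) : Finset (Fin d → ℕ) :=
  {x ∈ A | chainClass s x = q}

theorem mem_chainPart {q : ChainGroup s} : x ∈ chainPart A q ↔ x ∈ A ∧ chainClass s x = q := by
  classical exact mem_filter

open Classical in
/-- The chains in direction `s` that meet the box `[0, F]`. -/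
noncomputable def chains (s F : Fin d → ℕ) : Finset (ChainGroup s) :=
  (Iic F).image (chainClass s)

theorem mem_chains {q : ChainGroup s} : q ∈ chains s F ↔ ∃ x ≤ F, chainClass s x = q := by
  classical simp [chains]

theorem card_chains_add_card_Icc_le (hs : s ≠ 0) : #(chains s F) + #(Icc s F) ≤ #(Iic F) := by
  classical
  have hsub : Icc s F ⊆ Iic F := fun x hx ↦ mem_Iic.2 (mem_Icc.1 hx).2
  have hchains : chains s F ⊆ (Iic F \ Icc s F).image (chainClass s) := by
    intro q hq
    obtain ⟨x, hxF, hxq⟩ := mem_chains.1 hq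
    obtain ⟨m, hm⟩ := (chainPart (Iic F) q).exists_minimal ⟨x, mem_chainPart.2 ⟨by simpa, hxq⟩⟩
    obtain ⟨hmF, hmq⟩ := mem_chainPart.1 hm.1
    refine mem_image.2 ⟨m, mem_sdiff.2 ⟨hmF, fun hsm ↦ hs ?_⟩, hmq⟩
    have hsm := (mem_Icc.1 hsm).1
    have hle : m ≤ m - s := hm.2 (mem_chainPart.2 ⟨mem_Iic.2 (tsub_le_self.trans (mem_Iic.1 hmF)),
      by rw [chainClass_sub hsm, chainClass_self, sub_zero, hmq]⟩) tsub_le_self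
    have hsum := tsub_add_cancel_of_le hsm
    rwa [tsub_le_self.antisymm hle, add_eq_left] at hsum
  have hcard := (card_le_card hchains).trans card_image_le
  have := card_le_card hsub
  rw [card_sdiff_of_subset hsub] at hcard
  omega

theorem sum_card_chainPart_Iic (s F : Fin d → ℕ) :
    ∑ q ∈ chains s F, #(chainPart (Iic F) q) = #(Iic F) := by
  classical exact (card_eq_sum_card_image _ _).symm

namespace IsTrace

theorem chainPart_subset_or_subset (hA : IsTrace F A) (hB : IsTrace F B) (hsA : s ∈ A) (hsB : s ∈ B)
    (q : ChainGroup s) : chainPart A q ⊆ chainPart B q ∨ chainPart B q ⊆ chainPart A q := by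
  refine or_iff_not_imp_left.2 fun hAB y hy ↦ ?_
  obtain ⟨x, hx, hxB⟩ := not_subset.1 hAB
  obtain ⟨hxA, hxq⟩ := mem_chainPart.1 hx
  obtain ⟨hyB, hyq⟩ := mem_chainPart.1 hy
  refine mem_chainPart.2 ⟨?_, hyq⟩
  obtain ⟨k, rfl | rfl⟩ := exists_eq_add_nsmul_of_chainClass_eq (hxq.trans hyq.symm)
  · exact hA.add_nsmul_mem hsA hxA k (mem_Iic.1 (hB.subset hyB))
  · exact absurd (mem_chainPart.2 ⟨hB.add_nsmul_mem hsB hyB k (mem_Iic.1 (hA.subset hxA)), hxq⟩) hxB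

theorem subset_of_card_chainPart_eq (hA : IsTrace F A) (hB : IsTrace F B) (hsA : s ∈ A)
    (hsB : s ∈ B) (h : ∀ q ∈ chains s F, #(chainPart A q) = #(chainPart B q)) : A ⊆ B := by
  intro x hx
  have hq := h (chainClass s x) (mem_chains.2 ⟨x, mem_Iic.1 (hA.subset hx), rfl⟩)
  have heq : chainPart A (chainClass s x) = chainPart B (chainClass s x) := by
    rcases hA.chainPart_subset_or_subset hB hsA hsB (chainClass s x) with hsub | hsub
    · exact eq_of_subset_of_card_le hsub hq.ge
    · exact (eq_of_subset_of_card_le hsub hq.le).symm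
  exact (mem_chainPart.1 (heq ▸ mem_chainPart.2 ⟨hx, rfl⟩)).1

theorem card_chainPart_add_card_chainPart_le (hA : IsTrace F A) (q : ChainGroup s) :
    #(chainPart A q) + #(chainPart A (chainClass s F - q)) ≤ #(chainPart (Iic F) q) := by
  classical
  have hle : ∀ {x}, x ∈ A → x ≤ F := fun hx ↦ mem_Iic.1 (hA.subset hx)
  have hinj : Set.InjOn (F - ·) (chainPart A (chainClass s F - q) : Set (Fin d → ℕ)) :=
    fun x hx y hy hxy ↦
      (tsub_right_inj (hle (mem_chainPart.1 hx).1) (hle (mem_chainPart.1 hy).1)).1 hxy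
  have hdisj : Disjoint (chainPart A q) ((chainPart A (chainClass s F - q)).image (F - ·)) := by
    refine disjoint_right.2 fun z hz hzA ↦ ?_
    obtain ⟨x, hx, rfl⟩ := mem_image.1 hz
    exact hA.sub_notMem (mem_chainPart.1 hx).1 (mem_chainPart.1 hzA).1
  rw [← card_image_of_injOn hinj, ← card_union_of_disjoint hdisj]
  refine card_le_card (union_subset (fun x hx ↦ ?_) fun z hz ↦ ?_)
  · exact mem_chainPart.2 ((mem_chainPart.1 hx).imp_left (hA.subset ·))
  · obtain ⟨x, hx, rfl⟩ := mem_image.1 hz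
    obtain ⟨hxA, hxq⟩ := mem_chainPart.1 hx
    exact mem_chainPart.2
      ⟨mem_Iic.2 tsub_le_self, by rw [chainClass_sub (hle hxA), hxq, sub_sub_cancel]⟩

end IsTrace

/-- The pairs of natural numbers with sum at most `L`. -/
def pairsSumLE (L : ℕ) : Finset (ℕ × ℕ) :=
  (range (L + 1)).biUnion fun m ↦ antidiagonal m

theorem mem_pairsSumLE {L : ℕ} {p : ℕ × ℕ} : p ∈ pairsSumLE L ↔ p.1 + p.2 ≤ L := by
  simp [pairsSumLE]

theorem two_mul_card_pairsSumLE_le (L : ℕ) : 2 * #(pairsSumLE L) ≤ 3 * 2 ^ L := by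
  have hcard : #(pairsSumLE L) ≤ ∑ m ∈ range (L + 1), (m + 1) :=
    card_biUnion_le.trans (sum_le_sum fun m _ ↦ (Nat.card_antidiagonal m).le)
  have hgauss : 2 * ∑ m ∈ range (L + 1), (m + 1) = (L + 2) * (L + 1) := by
    rw [← add_zero (∑ m ∈ range (L + 1), (m + 1)), ← sum_range_succ' (fun m ↦ m), mul_comm]
    exact sum_range_id_mul_two (L + 2)
  have hpow : (L + 2) * (L + 1) ≤ 3 * 2 ^ L := by
    clear hcard hgauss
    rcases L.eq_zero_or_pos with rfl | hL
    · norm_num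
    · induction L, hL using Nat.le_induction with
      | base => norm_num
      | succ L hL ih => rw [pow_succ]; nlinarith
  linarith

theorem card_traces_mem_sq_le_prod (s F : Fin d → ℕ) :
    #{A ∈ traces F | s ∈ A} ^ 2 ≤ ∏ q ∈ chains s F, #(pairsSumLE #(chainPart (Iic F) q)) := by
  have htrace : ∀ A ∈ {A ∈ traces F | s ∈ A}, IsTrace F A ∧ s ∈ A :=
    fun A hA ↦ (mem_filter.1 hA).imp_left mem_traces.1
  refine card_sq_le_prod_card_of_involution (σ := (chainClass s F - ·)) (fun q hq ↦ ?_)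
    (fun q _ ↦ sub_sub_cancel _ q) (fun A q ↦ #(chainPart A q)) (fun A hA B hB hAB ↦ ?_) _
    (fun A hA q _ ↦ ?_) (fun A hA B hB q _ hfix ↦ ?_)
  · obtain ⟨x, hxF, rfl⟩ := mem_chains.1 hq
    exact mem_chains.2 ⟨F - x, tsub_le_self, chainClass_sub hxF⟩
  · obtain ⟨hA, hsA⟩ := htrace A hA
    obtain ⟨hB, hsB⟩ := htrace B hB
    exact (hA.subset_of_card_chainPart_eq hB hsA hsB hAB).antisymm
      (hB.subset_of_card_chainPart_eq hA hsB hsA fun q hq ↦ (hAB q hq).symm)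
  · exact mem_pairsSumLE.2 ((htrace A hA).1.card_chainPart_add_card_chainPart_le q)
  · have hA' := (htrace A hA).1.card_chainPart_add_card_chainPart_le q
    have hB' := (htrace B hB).1.card_chainPart_add_card_chainPart_le q
    rw [hfix] at hA' hB'
    exact mem_pairsSumLE.2 (by omega)

theorem card_traces_mem_sq_le (hs : s ≠ 0) :
    (#{A ∈ traces F | s ∈ A} : ℝ) ^ 2 ≤ 3 ^ normF F * (2 / 3) ^ #(Icc s F) := by
  have hle : #(chains s F) + #(Icc s F) ≤ normF F := by
    rw [normF_eq_card_Iic]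
    exact card_chains_add_card_Icc_le hs
  have hIcc : #(Icc s F) ≤ normF F := (Nat.le_add_left _ _).trans hle
  calc (#{A ∈ traces F | s ∈ A} : ℝ) ^ 2
      ≤ ∏ q ∈ chains s F, (#(pairsSumLE #(chainPart (Iic F) q)) : ℝ) := by
        exact_mod_cast card_traces_mem_sq_le_prod s F
    _ ≤ ∏ q ∈ chains s F, (3 / 2 * 2 ^ #(chainPart (Iic F) q) : ℝ) := by
      refine prod_le_prod (fun _ _ ↦ Nat.cast_nonneg _) fun q _ ↦ ?_
      have : (2 * #(pairsSumLE #(chainPart (Iic F) q)) : ℝ) ≤ 3 * 2 ^ #(chainPart (Iic F) q) := by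
        exact_mod_cast two_mul_card_pairsSumLE_le _
      linarith
    _ = (3 / 2) ^ #(chains s F) * 2 ^ normF F := by
      rw [prod_mul_distrib, prod_const, prod_pow_eq_pow_sum, sum_card_chainPart_Iic,
        normF_eq_card_Iic]
    _ ≤ (3 / 2) ^ (normF F - #(Icc s F)) * 2 ^ normF F := by
      gcongr
      · norm_num
      · exact Nat.le_sub_of_add_le hle
    _ = 3 ^ normF F * (2 / 3) ^ #(Icc s F) := by
      rw [pow_sub₀ _ (by norm_num) hIcc, mul_right_comm, ← mul_pow, ← inv_pow]
      norm_num

theorem card_traces_mem_le (hs : s ≠ 0) :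
    (#{A ∈ traces F | s ∈ A} : ℝ) ≤ √3 ^ normF F * (2 / 3) ^ ((#(Icc s F) : ℝ) / 2) := by
  refine le_of_sq_le_sq ?_ (by positivity)
  rw [mul_pow, pow_right_comm, Real.sq_sqrt (by simp), ← Real.rpow_mul_natCast (by norm_num),
    Nat.cast_two, div_mul_cancel₀ _ two_ne_zero, Real.rpow_natCast]
  exact card_traces_mem_sq_le hs

end Containing

section Counting

variable {d : ℕ} {F s : Fin d → ℕ} {D : Finset (Fin d → ℕ)} {β t : ℝ}

theorem NF_zero : NF (0 : Fin d → ℕ) = 0 := by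
  have : traces (0 : Fin d → ℕ) = ∅ :=
    eq_empty_of_forall_notMem fun A hA ↦ (mem_traces.1 hA).notMem (mem_traces.1 hA).zero_mem
  simpa [this] using NF_le_card_traces (0 : Fin d → ℕ)

theorem NF_le_sqrt_three_pow_div_three (F : Fin d → ℕ) : (NF F : ℝ) ≤ √3 ^ normF F / 3 := by
  rcases eq_or_ne F 0 with rfl | hF
  · rw [NF_zero, Nat.cast_zero]
    positivity
  · calc (NF F : ℝ) ≤ #(traces F) := Nat.cast_le.2 (NF_le_card_traces F)
      _ ≤ √3 ^ normF F / 3 := by simpa using card_traces_disjoint_le hF (empty_subset _)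

theorem NF_le_of_subset_Ioo (hF : F ≠ 0) (hD : D ⊆ Ioo 0 F) {m : ℝ}
    (hm : ∀ s ∈ D, m ≤ #(Icc s F)) :
    (NF F : ℝ) ≤ √3 ^ normF F * ((2 / 3) ^ #D / 3 + #D * (2 / 3) ^ (m / 2)) := by
  classical
  have hcover : traces F ⊆
      {A ∈ traces F | Disjoint A D} ∪ D.biUnion fun s ↦ {A ∈ traces F | s ∈ A} := by
    intro A hA
    by_cases hAD : Disjoint A D
    · exact mem_union_left _ (mem_filter.2 ⟨hA, hAD⟩)
    · obtain ⟨s, hsA, hsD⟩ := not_disjoint_iff.1 hAD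
      exact mem_union_right _ (mem_biUnion.2 ⟨s, hsD, mem_filter.2 ⟨hA, hsA⟩⟩)
  have hmem : ∀ s ∈ D,
      (#{A ∈ traces F | s ∈ A} : ℝ) ≤ √3 ^ normF F * (2 / 3) ^ (m / 2) := by
    intro s hs
    refine (card_traces_mem_le (mem_Ioo.1 (hD hs)).1.ne').trans ?_
    gcongr _ * ?_
    exact Real.rpow_le_rpow_of_exponent_ge (by norm_num) (by norm_num) (by linarith [hm s hs])
  have hunion : NF F ≤ #{A ∈ traces F | Disjoint A D} + ∑ s ∈ D, #{A ∈ traces F | s ∈ A} :=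
    (NF_le_card_traces F).trans <| (card_le_card hcover).trans <|
      (card_union_le _ _).trans (Nat.add_le_add_left card_biUnion_le _)
  calc (NF F : ℝ)
      ≤ #{A ∈ traces F | Disjoint A D} + ∑ s ∈ D, (#{A ∈ traces F | s ∈ A} : ℝ) := by
        exact_mod_cast hunion
    _ ≤ √3 ^ normF F / 3 * (2 / 3) ^ #D + ∑ _s ∈ D, √3 ^ normF F * (2 / 3) ^ (m / 2) :=
      add_le_add (card_traces_disjoint_le hF hD) (sum_le_sum hmem)
    _ = √3 ^ normF F * ((2 / 3) ^ #D / 3 + #D * (2 / 3) ^ (m / 2)) := by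
      rw [sum_const, nsmul_eq_mul]
      ring

/-- The lattice points of the box `[0, F]` scaled by `β`, with its upper faces removed. -/
noncomputable def scaledBox (β : ℝ) (F : Fin d → ℕ) : Finset (Fin d → ℕ) :=
  Fintype.piFinset fun i ↦ range ⌈β * (F i + 1)⌉₊

theorem mem_scaledBox : s ∈ scaledBox β F ↔ ∀ i, (s i : ℝ) < β * (F i + 1) := by
  simp [scaledBox, Nat.lt_ceil]

theorem pow_mul_normF_le_card_scaledBox (hβ : 0 ≤ β) (F : Fin d → ℕ) :
    β ^ d * normF F ≤ #(scaledBox β F) := by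
  have : β ^ d * normF F = ∏ i, (β * (F i + 1) : ℝ) := by simp [normF, prod_mul_distrib]
  rw [this, scaledBox, Fintype.card_piFinset, Nat.cast_prod]
  exact prod_le_prod (fun i _ ↦ by positivity) fun i _ ↦ by simpa using Nat.le_ceil _

theorem le_of_mem_scaledBox (hβ : β ≤ 1) (hs : s ∈ scaledBox β F) : s ≤ F := by
  intro i
  have : (s i : ℝ) < F i + 1 :=
    (mem_scaledBox.1 hs i).trans_le (mul_le_of_le_one_left (by positivity) hβ)
  exact Nat.lt_succ_iff.1 (by exact_mod_cast this)

theorem pow_mul_normF_le_card_Icc_of_mem_scaledBox (hβ : β ≤ 1) (hs : s ∈ scaledBox β F) :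
    (1 - β) ^ d * normF F ≤ #(Icc s F) := by
  have : (1 - β) ^ d * normF F = ∏ i, ((1 - β) * (F i + 1) : ℝ) := by
    simp [normF, prod_mul_distrib]
  rw [this, Pi.card_Icc, Nat.cast_prod]
  refine prod_le_prod (fun i _ ↦ mul_nonneg (sub_nonneg.2 hβ) (by positivity)) fun i _ ↦ ?_
  rw [Nat.card_Icc, Nat.cast_sub ((le_of_mem_scaledBox hβ hs i).trans (Nat.le_succ _))]
  push_cast
  linarith [mem_scaledBox.1 hs i]

theorem le_card_scaledBox_inter_Ioo (hβ₀ : 0 ≤ β) (hβ₁ : β ≤ 1) (hF : F ≠ 0)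
    (hbox : t + 1 ≤ β ^ d * normF F) (ht : t + 2 ≤ normF F) :
    t ≤ #(scaledBox β F ∩ Ioo 0 F) := by
  by_cases hFmem : F ∈ scaledBox β F
  · have hsub : Ioo 0 F ⊆ scaledBox β F := fun x hx ↦ mem_scaledBox.2 fun i ↦
      (Nat.cast_le.2 ((mem_Ioo.1 hx).2.le i)).trans_lt (mem_scaledBox.1 hFmem i)
    have hn : (normF F : ℝ) = #(Ioo 0 F) + 2 := by exact_mod_cast normF_eq_card_Ioo_add_two hF
    rw [inter_eq_right.2 hsub]
    linarith
  · have hsub : scaledBox β F ⊆ insert 0 (scaledBox β F ∩ Ioo 0 F) := by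
      intro x hx
      rcases eq_or_ne x 0 with rfl | hx0
      · exact mem_insert_self _ _
      · exact mem_insert_of_mem <| mem_inter.2 ⟨hx, mem_Ioo.2 ⟨pos_iff_ne_zero.2 hx0,
          (le_of_mem_scaledBox hβ₁ hx).lt_of_ne fun h ↦ hFmem (h ▸ hx)⟩⟩
    have hcard : (#(scaledBox β F) : ℝ) ≤ #(scaledBox β F ∩ Ioo 0 F) + 1 := by
      exact_mod_cast (card_le_card hsub).trans (card_insert_le _ _)
    linarith [pow_mul_normF_le_card_scaledBox hβ₀ F]

theorem NF_le_of_scaledBox (hβ₀ : 0 ≤ β) (hβ₁ : β ≤ 1) (ht₀ : 0 ≤ t)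
    (hbox : t + 1 ≤ β ^ d * normF F) (ht : t + 2 ≤ normF F) :
    (NF F : ℝ) ≤ √3 ^ normF F *
      ((2 / 3) ^ t / 3 + (t + 1) * (2 / 3) ^ ((1 - β) ^ d * normF F / 2)) := by
  have hF : F ≠ 0 := by
    rintro rfl
    norm_num [normF] at ht
    linarith
  obtain ⟨D, hD, hcard⟩ := exists_subset_card_eq
    (Nat.ceil_le.2 (le_card_scaledBox_inter_Ioo hβ₀ hβ₁ hF hbox ht))
  have hDt : t ≤ #D := hcard ▸ Nat.le_ceil t
  have hDt' : (#D : ℝ) ≤ t + 1 := hcard ▸ (Nat.ceil_lt_add_one ht₀).le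
  refine (NF_le_of_subset_Ioo hF (hD.trans inter_subset_right) fun s hs ↦
    pow_mul_normF_le_card_Icc_of_mem_scaledBox hβ₁ (mem_inter.1 (hD hs)).1).trans ?_
  gcongr √3 ^ _ * (?_ / 3 + ?_ * _)
  rw [← Real.rpow_natCast]
  exact Real.rpow_le_rpow_of_exponent_ge (by norm_num) (by norm_num) hDt

end Counting

section Rate

variable {ρ : ℝ}

/-- The exponent `r` of the counting bound `√3 ^ ‖F‖ * (2 / 3) ^ (r * ‖F‖)`, as a function of
`ρ = (1 - ε) ^ d`. The solution `r` of `√3 * (2 / 3) ^ r = φ * (φ / 5 ^ (1 / 4)) ^ (1 - ρ)` is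
affine in `ρ`; here its values at `ρ = 1` and `ρ = 0` are rounded up to rational numbers. -/
noncomputable def rate (ρ : ℝ) : ℝ := 21 / 125 * ρ - 13 / 500 * (1 - ρ)

theorem le_goldenRatio : 1.618 ≤ Real.goldenRatio := by
  have : (2.236 : ℝ) ≤ √5 := Real.le_sqrt_of_sq_le (by norm_num)
  rw [Real.goldenRatio]
  linarith

theorem sqrt_three_mul_rpow_le_goldenRatio : √3 * (2 / 3) ^ (21 / 125 : ℝ) ≤ Real.goldenRatio := by
  refine le_of_pow_le_pow_left₀ (n := 250) (by norm_num) Real.goldenRatio_pos.le ?_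
  calc (√3 * (2 / 3) ^ (21 / 125 : ℝ)) ^ 250 = (√3 ^ 2) ^ 125 * (2 / 3) ^ (42 : ℝ) := by
        rw [mul_pow, ← Real.rpow_mul_natCast (by norm_num), ← pow_mul]
        norm_num
    _ = 3 ^ 125 * (2 / 3) ^ 42 := by rw [Real.sq_sqrt (by norm_num)]; norm_cast
    _ ≤ (1.618 + 1) ^ 125 := by norm_num
    _ ≤ (Real.goldenRatio + 1) ^ 125 := by gcongr; exact le_goldenRatio
    _ = Real.goldenRatio ^ 250 := by rw [← Real.goldenRatio_sq, ← pow_mul]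

theorem goldenRatio_pow_eight : Real.goldenRatio ^ 8 = 21 * Real.goldenRatio + 13 := by
  linear_combination (Real.goldenRatio ^ 6 + Real.goldenRatio ^ 5 + 2 * Real.goldenRatio ^ 4 +
    3 * Real.goldenRatio ^ 3 + 5 * Real.goldenRatio ^ 2 + 8 * Real.goldenRatio + 13) *
    Real.goldenRatio_sq

theorem sqrt_three_mul_rpow_le_goldenRatio_sq_div :
    √3 * (2 / 3) ^ (-13 / 500 : ℝ) ≤ Real.goldenRatio ^ 2 / 5 ^ (1 / 4 : ℝ) := by
  have := Real.goldenRatio_pos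
  rw [le_div_iff₀ (by positivity)]
  refine le_of_pow_le_pow_left₀ (n := 500) (by norm_num) (by positivity) ?_
  calc (√3 * (2 / 3) ^ (-13 / 500 : ℝ) * 5 ^ (1 / 4 : ℝ)) ^ 500
      = (√3 ^ 2) ^ 250 * (2 / 3) ^ (-13 : ℝ) * 5 ^ (125 : ℝ) := by
        rw [mul_pow, mul_pow, ← Real.rpow_mul_natCast (by norm_num),
          ← Real.rpow_mul_natCast (by norm_num), ← pow_mul]
        norm_num
    _ = 3 ^ 250 * (3 / 2) ^ 13 * 5 ^ 125 := by
      rw [Real.sq_sqrt (by norm_num), Real.rpow_neg (by norm_num), ← Real.inv_rpow (by norm_num)]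
      norm_num
    _ ≤ (21 * 1.618 + 13) ^ 125 := by norm_num
    _ ≤ (21 * Real.goldenRatio + 13) ^ 125 := by gcongr; exact le_goldenRatio
    _ = (Real.goldenRatio ^ 2) ^ 500 := by rw [← goldenRatio_pow_eight, ← pow_mul, ← pow_mul]

theorem sqrt_three_mul_rpow_rate_le (hρ₀ : 0 ≤ ρ) (hρ₁ : ρ ≤ 1) :
    √3 * (2 / 3) ^ rate ρ ≤
      Real.goldenRatio * (Real.goldenRatio / 5 ^ (1 / 4 : ℝ)) ^ (1 - ρ) := by
  have hφ := Real.goldenRatio_pos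
  have hsplit : ∀ {a : ℝ}, 0 < a → a ^ ρ * a ^ (1 - ρ) = a := fun ha ↦ by
    rw [← Real.rpow_add ha, add_sub_cancel, Real.rpow_one]
  calc √3 * (2 / 3) ^ rate ρ
      = (√3 * (2 / 3) ^ (21 / 125 : ℝ)) ^ ρ * (√3 * (2 / 3) ^ (-13 / 500 : ℝ)) ^ (1 - ρ) := by
        rw [Real.mul_rpow (by positivity) (by positivity),
          Real.mul_rpow (by positivity) (by positivity), mul_mul_mul_comm, hsplit (by positivity),
          ← Real.rpow_mul (by positivity), ← Real.rpow_mul (by positivity),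
          ← Real.rpow_add (by positivity), rate]
        ring_nf
    _ ≤ Real.goldenRatio ^ ρ * (Real.goldenRatio ^ 2 / 5 ^ (1 / 4 : ℝ)) ^ (1 - ρ) := by
      gcongr
      · exact sqrt_three_mul_rpow_le_goldenRatio
      · exact sqrt_three_mul_rpow_le_goldenRatio_sq_div
    _ = Real.goldenRatio * (Real.goldenRatio / 5 ^ (1 / 4 : ℝ)) ^ (1 - ρ) := by
      rw [sq, mul_div_assoc, Real.mul_rpow hφ.le (by positivity), ← mul_assoc, hsplit hφ]

theorem sqrt_three_pow_mul_rpow_rate_le (hρ₀ : 0 ≤ ρ) (hρ₁ : ρ ≤ 1) (n : ℕ) :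
    √3 ^ n * (2 / 3) ^ (rate ρ * n) ≤ Real.goldenRatio ^ n *
      (Real.goldenRatio / 5 ^ (1 / 4 : ℝ)) ^ ((1 - ρ) * n) := by
  have := Real.goldenRatio_pos
  rw [Real.rpow_mul_natCast (by norm_num), Real.rpow_mul_natCast (by positivity), ← mul_pow,
    ← mul_pow]
  exact pow_le_pow_left₀ (by positivity) (sqrt_three_mul_rpow_rate_le hρ₀ hρ₁) n

theorem rate_le_of_le_one (hρ : ρ ≤ 1) : rate ρ ≤ 21 / 125 := by
  rw [rate]
  linarith

theorem rate_le_div_four (hρ : 0 ≤ ρ) : rate ρ ≤ ρ / 4 := by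
  rw [rate]
  linarith

theorem rate_mul_le_sq_div_two (ρ : ℝ) : 11 / 8 * rate ρ ≤ ρ ^ 2 / 2 := by
  rw [rate]
  nlinarith [sq_nonneg (ρ - 1067 / 4000)]

end Rate

section Optimization

/- `19 / 7` is slightly more than `log 3 / log (3 / 2)`, the number of points of `D` that pay for
one factor `3`; `11 / 8` leaves `3 / 8` of the rate to absorb this enlargement of `D`. -/
theorem exists_scale_of_pow_lt_rate {ε : ℝ} (hε₀ : 0 < ε) (hε₁ : ε < 1) {d : ℕ} (hd : 1 ≤ d)
    (h : ε ^ d < rate ((1 - ε) ^ d)) :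
    ∃ β, 0 ≤ β ∧ β ≤ 1 ∧ 19 / 7 * ε ^ d ≤ β ^ d ∧
      11 / 8 * rate ((1 - ε) ^ d) ≤ (1 - β) ^ d / 2 := by
  obtain rfl | hd := hd.eq_or_lt
  · simp only [pow_one, rate] at h ⊢
    exact ⟨3 * ε, by linarith, by linarith, by linarith, by linarith⟩
  refine ⟨ε * (2 - ε), by nlinarith, by nlinarith, ?_, ?_⟩
  · suffices 19 / 7 ≤ (2 - ε) ^ d by
      rw [mul_pow, mul_comm]
      gcongr
    obtain rfl | hd := (Nat.succ_le_of_lt hd).eq_or_lt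
    · have : ε < 1 / 3 := by
        rw [rate] at h
        nlinarith
      nlinarith
    · have : ε < 1 / 2 := by
        by_contra! hε
        have hρ : (1 - ε) ^ d ≤ (1 / 2) ^ 3 :=
          (pow_le_pow_left₀ (by linarith) (by linarith) d).trans
            (pow_le_pow_of_le_one (by norm_num) (by norm_num) hd)
        rw [rate] at h
        linarith [pow_pos hε₀ d]
      calc (19 / 7 : ℝ) ≤ (3 / 2) ^ 3 := by norm_num
        _ ≤ (3 / 2) ^ d := pow_le_pow_right₀ (by norm_num) hd
        _ ≤ (2 - ε) ^ d := pow_le_pow_left₀ (by norm_num) (by linarith) d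
  · have : (1 - ε * (2 - ε)) ^ d = ((1 - ε) ^ d) ^ 2 := by
      rw [pow_right_comm]
      ring
    rw [this]
    exact rate_mul_le_sq_div_two _

theorem one_le_of_two_thirds_rpow_le {r : ℝ} (h : (2 / 3 : ℝ) ^ r ≤ 1 / 3) : 1 ≤ r := by
  by_contra! hr
  have := Real.rpow_lt_rpow_of_exponent_gt (x := (2 / 3 : ℝ)) (by norm_num) (by norm_num) hr
  rw [Real.rpow_one] at this
  linarith

theorem two_thirds_rpow_div_three_le {T : ℝ} (hT : 1 ≤ T) :
    (2 / 3 : ℝ) ^ (19 / 7 * (T - 1)) / 3 ≤ 3 ^ (-T) := by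
  have hbase : (2 / 3 : ℝ) ^ (19 / 7 : ℝ) ≤ 3⁻¹ := by
    refine le_of_pow_le_pow_left₀ (n := 7) (by norm_num) (by norm_num) ?_
    rw [← Real.rpow_mul_natCast (by norm_num), Nat.cast_ofNat, div_mul_cancel₀ _ (by norm_num)]
    norm_num
  calc (2 / 3 : ℝ) ^ (19 / 7 * (T - 1)) / 3 = ((2 / 3) ^ (19 / 7 : ℝ)) ^ (T - 1) / 3 := by
        rw [Real.rpow_mul (by norm_num)]
    _ ≤ 3⁻¹ ^ (T - 1) / 3 := by
      gcongr
    _ = 3 ^ (-T) := by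
      rw [Real.inv_rpow (by norm_num), ← Real.rpow_neg (by norm_num), neg_sub, sub_eq_neg_add,
        Real.rpow_add_one (by norm_num), mul_div_cancel_right₀ _ (by norm_num)]

theorem mul_rpow_eleven_eighths_le {T P : ℝ} (hT : 1 ≤ T) (hP : 0 ≤ P) (h : 3 * T * P ≤ 1) :
    (19 / 7 * (T - 1) + 1) * P ^ (11 / 8 : ℝ) ≤ T * P := by
  have hpoly : (19 / 7 * (T - 1) + 1) ^ 8 ≤ 27 * T ^ 11 := by
    obtain ⟨x, hx, rfl⟩ : ∃ x, 0 ≤ x ∧ T = 1 + x := ⟨T - 1, by linarith, by ring⟩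
    rw [← sub_nonneg]
    ring_nf
    positivity
  obtain ⟨p, hp, rfl⟩ : ∃ p : ℝ, 0 ≤ p ∧ P = p ^ 8 :=
    ⟨P ^ (1 / 8 : ℝ), by positivity, by rw [← Real.rpow_mul_natCast hP]; norm_num⟩
  have hroot : (19 / 7 * (T - 1) + 1) * p ^ 3 ≤ T := by
    refine le_of_pow_le_pow_left₀ (n := 8) (by norm_num) (by linarith) ?_
    calc ((19 / 7 * (T - 1) + 1) * p ^ 3) ^ 8
        = (19 / 7 * (T - 1) + 1) ^ 8 * p ^ 24 := by ring
      _ ≤ 27 * T ^ 11 * p ^ 24 := by gcongr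
      _ = T ^ 8 * (3 * T * p ^ 8) ^ 3 := by ring
      _ ≤ T ^ 8 * 1 ^ 3 := by gcongr
      _ = T ^ 8 := by ring
  calc (19 / 7 * (T - 1) + 1) * (p ^ 8) ^ (11 / 8 : ℝ)
      = (19 / 7 * (T - 1) + 1) * p ^ 3 * p ^ 8 := by
        rw [← Real.rpow_natCast_mul hp]
        norm_num
        ring
    _ ≤ T * p ^ 8 := by gcongr

theorem sqrt_three_rpow_one_sub_two_mul (a : ℝ) (n : ℕ) :
    √3 ^ ((1 - 2 * a) * n) = √3 ^ n * 3 ^ (-(a * n)) := by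
  have hbase : √3 ^ (-2 * (a * n)) = 3 ^ (-(a * n)) := by
    rw [neg_mul_comm, Real.rpow_mul (Real.sqrt_nonneg 3), Real.rpow_two,
      Real.sq_sqrt (by norm_num)]
  rw [← hbase, ← Real.rpow_natCast, ← Real.rpow_add (by positivity)]
  ring_nf

end Optimization

section MainBound

variable {ε : ℝ} {d : ℕ} {F : Fin d → ℕ}

theorem NF_le_of_rate_le_pow (hε₀ : 0 ≤ ε) (hε₁ : ε ≤ 1) (hT : 1 ≤ ε ^ d * normF F)
    (hsmall : 3 * (ε ^ d * normF F) * (2 / 3) ^ (rate ((1 - ε) ^ d) * normF F) ≤ 1)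
    (hrate : rate ((1 - ε) ^ d) ≤ ε ^ d) :
    (NF F : ℝ) ≤ √3 ^ normF F *
      (ε ^ d * normF F * (2 / 3) ^ (rate ((1 - ε) ^ d) * normF F)) := by
  have hρ₀ : 0 ≤ (1 - ε) ^ d := pow_nonneg (by linarith) d
  have hρ₁ : (1 - ε) ^ d ≤ 1 := pow_le_one₀ (by linarith) (by linarith)
  set ρ := (1 - ε) ^ d
  set n : ℝ := (normF F : ℝ)
  set T := ε ^ d * n
  set P : ℝ := (2 / 3) ^ (rate ρ * n)
  have hn : 0 ≤ n := Nat.cast_nonneg _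
  have hP₀ : 0 < P := by positivity
  have hP : P ≤ 1 / 3 := by nlinarith
  have hr : 1 ≤ rate ρ * n := one_le_of_two_thirds_rpow_le hP
  have hrT : rate ρ * n ≤ T := mul_le_mul_of_nonneg_right hrate hn
  have hrn : rate ρ * n ≤ 21 / 125 * n := mul_le_mul_of_nonneg_right (rate_le_of_le_one hρ₁) hn
  have hdisjoint : (2 / 3 : ℝ) ^ (rate ρ * n - 1) = P * (3 / 2) := by
    rw [Real.rpow_sub_one (by norm_num)]
    change P / (2 / 3) = P * (3 / 2)
    ring
  have hcontain : (2 / 3 : ℝ) ^ (ρ * n / 2) ≤ P * (1 / 3) :=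
    calc (2 / 3 : ℝ) ^ (ρ * n / 2) ≤ (2 / 3) ^ (rate ρ * n + rate ρ * n) :=
          Real.rpow_le_rpow_of_exponent_ge (by norm_num) (by norm_num)
            (by nlinarith [rate_le_div_four hρ₀])
      _ = P * P := Real.rpow_add (by norm_num) _ _
      _ ≤ P * (1 / 3) := by gcongr
  refine (NF_le_of_scaledBox hε₀ hε₁ (t := rate ρ * n - 1) (by linarith) (by linarith)
    (by linarith)).trans ?_
  gcongr √3 ^ _ * ?_
  calc (2 / 3 : ℝ) ^ (rate ρ * n - 1) / 3 + (rate ρ * n - 1 + 1) * (2 / 3) ^ (ρ * n / 2)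
      ≤ P * (3 / 2) / 3 + T * (P * (1 / 3)) := by
        rw [hdisjoint]
        gcongr
        linarith
    _ ≤ T * P := by nlinarith

theorem NF_le_of_pow_lt_rate (hε₀ : 0 < ε) (hε₁ : ε < 1) (hd : 1 ≤ d)
    (hT : 1 ≤ ε ^ d * normF F)
    (hsmall : 3 * (ε ^ d * normF F) * (2 / 3) ^ (rate ((1 - ε) ^ d) * normF F) ≤ 1)
    (hrate : ε ^ d < rate ((1 - ε) ^ d)) :
    (NF F : ℝ) ≤ √3 ^ normF F * (3 ^ (-(ε ^ d * normF F)) +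
      ε ^ d * normF F * (2 / 3) ^ (rate ((1 - ε) ^ d) * normF F)) := by
  obtain ⟨β, hβ₀, hβ₁, hβ, hβrate⟩ := exists_scale_of_pow_lt_rate hε₀ hε₁ hd hrate
  have hρ₁ : (1 - ε) ^ d ≤ 1 := pow_le_one₀ (by linarith) (by linarith)
  set ρ := (1 - ε) ^ d
  set n : ℝ := (normF F : ℝ)
  have hn : 0 ≤ n := Nat.cast_nonneg _
  have hTn : ε ^ d * n ≤ 21 / 125 * n :=
    mul_le_mul_of_nonneg_right (hrate.le.trans (rate_le_of_le_one hρ₁)) hn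
  have hβn : 19 / 7 * (ε ^ d * n) ≤ β ^ d * n := by
    rw [← mul_assoc]
    exact mul_le_mul_of_nonneg_right hβ hn
  set T := ε ^ d * n
  have hcontain : (2 / 3 : ℝ) ^ ((1 - β) ^ d * n / 2) ≤
      ((2 / 3) ^ (rate ρ * n)) ^ (11 / 8 : ℝ) := by
    rw [← Real.rpow_mul (by norm_num)]
    exact Real.rpow_le_rpow_of_exponent_ge (by norm_num) (by norm_num) (by nlinarith)
  refine (NF_le_of_scaledBox hβ₀ hβ₁ (t := 19 / 7 * (T - 1)) (by linarith) (by linarith)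
    (by linarith)).trans ?_
  gcongr √3 ^ _ * ?_
  calc (2 / 3 : ℝ) ^ (19 / 7 * (T - 1)) / 3 +
        (19 / 7 * (T - 1) + 1) * (2 / 3) ^ ((1 - β) ^ d * n / 2)
      ≤ 3 ^ (-T) + (19 / 7 * (T - 1) + 1) * ((2 / 3) ^ (rate ρ * n)) ^ (11 / 8 : ℝ) := by
        gcongr
        exact two_thirds_rpow_div_three_le hT
    _ ≤ 3 ^ (-T) + T * (2 / 3) ^ (rate ρ * n) := by
      gcongr _ + ?_
      exact mul_rpow_eleven_eighths_le hT (by positivity) hsmall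

theorem NF_le_sqrt_three_pow_mul (hε₀ : 0 < ε) (hε₁ : ε < 1) (hd : 1 ≤ d) (F : Fin d → ℕ) :
    (NF F : ℝ) ≤ √3 ^ normF F * (3 ^ (-(ε ^ d * normF F)) +
      ε ^ d * normF F * (2 / 3) ^ (rate ((1 - ε) ^ d) * normF F)) := by
  have hfst : 0 ≤ (3 : ℝ) ^ (-(ε ^ d * normF F)) := by positivity
  have hsnd : 0 ≤ ε ^ d * normF F * (2 / 3) ^ (rate ((1 - ε) ^ d) * normF F) := by positivity
  have htrivial : ∀ {b : ℝ}, 1 / 3 ≤ b → (NF F : ℝ) ≤ √3 ^ normF F * b := fun hb ↦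
    (NF_le_sqrt_three_pow_div_three F).trans <| by
      rw [div_eq_mul_one_div]
      gcongr
  rcases lt_or_ge (ε ^ d * normF F) 1 with hT | hT
  · refine htrivial (le_add_of_le_of_nonneg ?_ hsnd)
    rw [one_div, ← Real.rpow_neg_one]
    exact Real.rpow_le_rpow_of_exponent_le (by norm_num) (by linarith)
  rcases lt_or_ge 1 (3 * (ε ^ d * normF F) * (2 / 3) ^ (rate ((1 - ε) ^ d) * normF F))
    with hbig | hsmall
  · exact htrivial (by linarith)
  rcases le_or_gt (rate ((1 - ε) ^ d)) (ε ^ d) with hrate | hrate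
  · refine (NF_le_of_rate_le_pow hε₀.le hε₁.le hT hsmall hrate).trans ?_
    gcongr √3 ^ _ * ?_
    exact le_add_of_nonneg_left hfst
  · exact NF_le_of_pow_lt_rate hε₀ hε₁ hd hT hsmall hrate

end MainBound

/-- For `0 < ε < 1`, with `φ = (1+√5)/2`,
`N(F) ≤ (√3)^{(1-2εᵈ)‖F‖} + εᵈ ‖F‖ φ^{‖F‖} (φ/5^{1/4})^{(1-(1-ε)ᵈ)‖F‖}`. -/
theorem upper_bound_epsilon (ε : ℝ) (hε0 : 0 < ε) (hε1 : ε < 1) (d : ℕ) (hd : 1 ≤ d)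
    (F : Fin d → ℕ) :
    (NF F : ℝ) ≤
      Real.sqrt 3 ^ ((1 - 2 * ε ^ d) * (normF F : ℝ)) +
        ε ^ d * (normF F : ℝ) * ((1 + Real.sqrt 5) / 2) ^ (normF F) *
          (((1 + Real.sqrt 5) / 2) / (5 : ℝ) ^ ((1 : ℝ) / 4)) ^
            ((1 - (1 - ε) ^ d) * (normF F : ℝ)) := by
  have hρ₀ : 0 ≤ (1 - ε) ^ d := pow_nonneg (by linarith) d
  have hρ₁ : (1 - ε) ^ d ≤ 1 := pow_le_one₀ (by linarith) (by linarith)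
  calc (NF F : ℝ)
      ≤ √3 ^ normF F * (3 ^ (-(ε ^ d * normF F)) +
          ε ^ d * normF F * (2 / 3) ^ (rate ((1 - ε) ^ d) * normF F)) :=
        NF_le_sqrt_three_pow_mul hε0 hε1 hd F
    _ = √3 ^ ((1 - 2 * ε ^ d) * (normF F : ℝ)) +
          ε ^ d * normF F * (√3 ^ normF F * (2 / 3) ^ (rate ((1 - ε) ^ d) * normF F)) := by
      rw [sqrt_three_rpow_one_sub_two_mul]
      ring
    _ ≤ √3 ^ ((1 - 2 * ε ^ d) * (normF F : ℝ)) +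
          ε ^ d * normF F * (Real.goldenRatio ^ normF F *
            (Real.goldenRatio / 5 ^ ((1 : ℝ) / 4)) ^ ((1 - (1 - ε) ^ d) * normF F)) := by
      gcongr _ + _ * ?_
      exact sqrt_three_pow_mul_rpow_rate_le hρ₀ hρ₁ _
    _ = _ := by rw [← mul_assoc]
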